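/- Tracked curves are geodesics (flat-space version of the Corollary to the main tracking theorem): let γ : ℝ → ℝ⁴ be smooth with η(γ'(t), γ'(t)) = 1 and γ'(t) future timelike for all t, and let 𝒞 be a collection of smooth fields T : ℝ⁴ → Matrix (Fin 4) (Fin 4) ℝ with symmetric values, each satisfying the dominant energy condition at every point and each divergence-free. If 𝒞 tracks γ, then γ''(t) = 0 for every t ∈ ℝ (γ is a straight line, i.e., a geodesic of Minkowski spacetime). -/

import Mathlib

open Matrix MeasureTheory Filter Topology

noncomputable section

abbrev Vec4 : Type := Fin 4 → ℝ
abbrev Mat4 : Type := Matrix (Fin 4) (Fin 4) ℝ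

/-- The Minkowski inner product on ℝ⁴. -/
def mink (x y : Vec4) : ℝ := x 0 * y 0 - x 1 * y 1 - x 2 * y 2 - x 3 * y 3

/-- The matrix diag(1,-1,-1,-1). -/
def E : Mat4 := Matrix.diagonal ![1, -1, -1, -1]

def FutureCausal (x : Vec4) : Prop := 0 ≤ mink x x ∧ 0 ≤ x 0
def FutureTimelike (x : Vec4) : Prop := 0 < mink x x ∧ 0 < x 0
def FutureNull (x : Vec4) : Prop := x ≠ 0 ∧ mink x x = 0 ∧ 0 < x 0
def UnitTimelike (x : Vec4) : Prop := FutureTimelike x ∧ mink x x = 1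

/-- The dominant energy condition for a matrix. -/
def DEC (T : Mat4) : Prop :=
  ∀ ξ ζ : Vec4, FutureCausal ξ → FutureCausal ζ → 0 ≤ ∑ i, ∑ j, ξ i * T i j * ζ j

/-- ⟨T, x⟩ = Σᵢⱼ T i j * x i j. -/
def minner (T x : Mat4) : ℝ := ∑ i, ∑ j, T i j * x i j

/-- The cone D of finite sums of symmetrized products of future causal vectors. -/
def coneD : Set Mat4 :=
  { x | ∃ (n : ℕ) (ξ ζ : Fin n → Vec4),
      (∀ k, FutureCausal (ξ k)) ∧ (∀ k, FutureCausal (ζ k)) ∧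
      x = ∑ k, (1/2 : ℝ) • (vecMulVec (ξ k) (ζ k) + vecMulVec (ζ k) (ξ k)) }

/-- A symmetric matrix is generic if it lies in the interior of D, taken within
the space of symmetric matrices. -/
def Generic (x : Mat4) : Prop :=
  ∃ h : xᵀ = x, (⟨x, h⟩ : { A : Mat4 // Aᵀ = A }) ∈
    interior { A : { A : Mat4 // Aᵀ = A } | A.val ∈ coneD }

/-- Partial derivative in the a-th coordinate direction. -/
def pd (a : Fin 4) (f : Vec4 → ℝ) (p : Vec4) : ℝ := fderiv ℝ f p (Pi.single a 1)

def SmoothMatField (T : Vec4 → Mat4) : Prop := ∀ a b, ContDiff ℝ (⊤ : ℕ∞) fun p => T p a b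
def SymValued (T : Vec4 → Mat4) : Prop := ∀ p, (T p)ᵀ = T p
def DivFree (T : Vec4 → Mat4) : Prop := ∀ p b, ∑ a, pd a (fun q => T q a b) p = 0

/-- A collection of fields tracks a curve. -/
def Tracks (C : Set (Vec4 → Mat4)) (γ : ℝ → Vec4) : Prop :=
  ∀ x : Vec4 → Mat4, SmoothMatField x → HasCompactSupport x → SymValued x →
    (∃ O : Set Vec4, IsOpen O ∧ Set.range γ ⊆ O ∧ ∀ p ∈ O, x p ∈ coneD) →
    (∃ t₀ : ℝ, Generic (x (γ t₀))) →
    ∃ T ∈ C, 0 < ∫ p, minner (T p) (x p)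

/-- Maxwell stress-energy tensor of a field strength matrix. -/
def maxwellT (F : Mat4) : Mat4 :=
  F * E * F - ((1/4 : ℝ) * (E * F * E * F).trace) • E

/-- Source-free Maxwell equations. -/
def SolvesMaxwell (F : Vec4 → Mat4) : Prop :=
  (∀ p b, ∑ a, E a a * pd a (fun q => F q a b) p = 0) ∧
  (∀ p a b c, pd a (fun q => F q b c) p + pd b (fun q => F q c a) p
      + pd c (fun q => F q a b) p = 0)

/-- Klein–Gordon stress-energy tensor. -/
def kgT (φ : Vec4 → ℝ) (m : ℝ) (p : Vec4) : Mat4 :=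
  Matrix.of fun a b =>
    pd a φ p * pd b φ p
      - (1/2 : ℝ) * E a b * ((∑ c, E c c * (pd c φ p)^2) - m^2 * (φ p)^2)

/-- Mass-m Klein–Gordon equation. -/
def SolvesKG (φ : Vec4 → ℝ) (m : ℝ) : Prop :=
  ∀ p, pd 0 (pd 0 φ) p - pd 1 (pd 1 φ) p - pd 2 (pd 2 φ) p - pd 3 (pd 3 φ) p
    + m^2 * φ p = 0

/-- The symmetrized gradient of a covector field. -/
def symGrad (ξ : Fin 4 → Vec4 → ℝ) (p : Vec4) : Mat4 :=
  Matrix.of fun a b => (pd a (ξ b) p + pd b (ξ a) p) / 2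

lemma contDiff_pd {f : Vec4 → ℝ} (hf : ContDiff ℝ (⊤ : ℕ∞) f) (a : Fin 4) :
    ContDiff ℝ (⊤ : ℕ∞) (pd a f) :=
  (hf.fderiv_right (m := (⊤ : ℕ∞)) le_rfl).clm_apply contDiff_const

lemma hasCompactSupport_pd {f : Vec4 → ℝ} (hf : HasCompactSupport f) (a : Fin 4) :
    HasCompactSupport (pd a f) :=
  hf.fderiv_apply ℝ _

lemma pd_congr {f g : Vec4 → ℝ} {p : Vec4} (h : f =ᶠ[𝓝 p] g) (a : Fin 4) :
    pd a f p = pd a g p := by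
  simp only [pd, h.fderiv_eq]

lemma smoothMatField_symGrad {ξ : Fin 4 → Vec4 → ℝ}
    (hξ : ∀ b, ContDiff ℝ (⊤ : ℕ∞) (ξ b)) : SmoothMatField (symGrad ξ) := fun a b =>
  ((contDiff_pd (hξ b) a).add (contDiff_pd (hξ a) b)).div_const 2

lemma symValued_symGrad (ξ : Fin 4 → Vec4 → ℝ) : SymValued (symGrad ξ) := by
  intro p
  ext a b
  simp [symGrad, add_comm]

lemma symGrad_congr {ξ ζ : Fin 4 → Vec4 → ℝ} {p : Vec4} (h : ∀ b, ξ b =ᶠ[𝓝 p] ζ b) :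
    symGrad ξ p = symGrad ζ p := by
  ext a b
  simp only [symGrad, Matrix.of_apply, pd_congr (h b), pd_congr (h a)]

lemma symGrad_eq_zero {ξ : Fin 4 → Vec4 → ℝ} {p : Vec4} (h : ∀ b, ξ b =ᶠ[𝓝 p] 0) :
    symGrad ξ p = 0 := by
  rw [symGrad_congr (ζ := fun _ => 0) h]
  ext a b
  simp [symGrad, pd]

lemma minner_symGrad {T : Mat4} (hT : Tᵀ = T) (ξ : Fin 4 → Vec4 → ℝ) (p : Vec4) :
    minner T (symGrad ξ p) = ∑ b, ∑ a, T a b * pd a (ξ b) p := by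
  have hs : ∀ i j, T i j = T j i := fun i j => congrFun (congrFun hT.symm i) j
  have h1 : ∑ a, ∑ b, T a b * pd b (ξ a) p = ∑ a, ∑ b, T b a * pd b (ξ a) p :=
    Finset.sum_congr rfl fun a _ => Finset.sum_congr rfl fun b _ => by rw [hs]
  have h2 : minner T (symGrad ξ p)
      = ((∑ a, ∑ b, T a b * pd a (ξ b) p) + ∑ a, ∑ b, T a b * pd b (ξ a) p) / 2 := by
    simp only [minner, symGrad, Matrix.of_apply, ← Finset.sum_add_distrib, Finset.sum_div]
    exact Finset.sum_congr rfl fun a _ => Finset.sum_congr rfl fun b _ => by ring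
  rw [h2, h1, Finset.sum_comm]
  ring

/-- A divergence-free symmetric field is orthogonal to symmetrized gradients. -/
lemma integral_minner_symGrad_eq_zero {T : Vec4 → Mat4} (hT : SmoothMatField T)
    (hsym : SymValued T) (hdiv : DivFree T) {ξ : Fin 4 → Vec4 → ℝ}
    (hξ : ∀ b, ContDiff ℝ (⊤ : ℕ∞) (ξ b)) (hc : ∀ b, HasCompactSupport (ξ b)) :
    ∫ p, minner (T p) (symGrad ξ p) = 0 := by
  have hTξ' : ∀ a b, Integrable fun p => T p a b * pd a (ξ b) p := fun a b =>
    ((hT a b).continuous.mul (contDiff_pd (hξ b) a).continuous).integrable_of_hasCompactSupport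
      (hasCompactSupport_pd (hc b) a).mul_left
  have hT'ξ : ∀ a b, Integrable fun p => pd a (fun q => T q a b) p * ξ b p := fun a b =>
    ((contDiff_pd (hT a b) a).continuous.mul (hξ b).continuous).integrable_of_hasCompactSupport
      (hc b).mul_left
  have hTξ : ∀ a b, Integrable fun p => T p a b * ξ b p := fun a b =>
    ((hT a b).continuous.mul (hξ b).continuous).integrable_of_hasCompactSupport (hc b).mul_left
  have hparts : ∀ a b, ∫ p, T p a b * pd a (ξ b) p
      = - ∫ p, pd a (fun q => T q a b) p * ξ b p := fun a b =>
    integral_mul_fderiv_eq_neg_fderiv_mul_of_integrable (hT'ξ a b) (hTξ' a b) (hTξ a b)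
      (fun p _ => (hT a b).differentiable (by simp) p)
      (fun p _ => (hξ b).differentiable (by simp) p)
  simp only [minner_symGrad (hsym _)]
  rw [integral_finsetSum _ fun b _ => integrable_finsetSum _ fun a _ => hTξ' a b]
  refine Finset.sum_eq_zero fun b _ => ?_
  rw [integral_finsetSum _ fun a _ => hTξ' a b]
  simp only [hparts]
  rw [Finset.sum_neg_distrib, ← integral_finsetSum _ fun a _ => hT'ξ a b]
  simp [← Finset.sum_mul, hdiv _ b]

lemma zero_mem_coneD : (0 : Mat4) ∈ coneD :=
  ⟨0, Fin.elim0, Fin.elim0, fun k => k.elim0, fun k => k.elim0, by simp⟩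

lemma add_mem_coneD {x y : Mat4} (hx : x ∈ coneD) (hy : y ∈ coneD) : x + y ∈ coneD := by
  obtain ⟨n, ξ, ζ, hξ, hζ, rfl⟩ := hx
  obtain ⟨m, ξ', ζ', hξ', hζ', rfl⟩ := hy
  refine ⟨n + m, Fin.append ξ ξ', Fin.append ζ ζ', fun k => ?_, fun k => ?_, ?_⟩
  · induction k using Fin.addCases <;> simp [hξ, hξ']
  · induction k using Fin.addCases <;> simp [hζ, hζ']
  · simp [Fin.sum_univ_add]

lemma sum_mem_coneD {ι : Type*} (s : Finset ι) {x : ι → Mat4} (h : ∀ i ∈ s, x i ∈ coneD) :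
    ∑ i ∈ s, x i ∈ coneD :=
  Finset.sum_induction _ (· ∈ coneD) (fun _ _ => add_mem_coneD) zero_mem_coneD h

lemma FutureCausal.smul {x : Vec4} (hx : FutureCausal x) {c : ℝ} (hc : 0 ≤ c) :
    FutureCausal (c • x) := by
  refine ⟨?_, mul_nonneg hc hx.2⟩
  have h : mink (c • x) (c • x) = c ^ 2 * mink x x := by
    simp only [mink, Pi.smul_apply, smul_eq_mul]; ring
  rw [h]
  exact mul_nonneg (sq_nonneg c) hx.1

lemma smul_mem_coneD {x : Mat4} (hx : x ∈ coneD) {c : ℝ} (hc : 0 ≤ c) : c • x ∈ coneD := by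
  obtain ⟨n, ξ, ζ, hξ, hζ, rfl⟩ := hx
  refine ⟨n, fun k => c • ξ k, ζ, fun k => (hξ k).smul hc, hζ, ?_⟩
  rw [Finset.smul_sum]
  refine Finset.sum_congr rfl fun k _ => ?_
  simp [Matrix.smul_vecMulVec, Matrix.vecMulVec_smul, smul_comm c]

lemma symProd_mem_coneD {ξ ζ : Vec4} (hξ : FutureCausal ξ) (hζ : FutureCausal ζ) :
    (1/2 : ℝ) • (vecMulVec ξ ζ + vecMulVec ζ ξ) ∈ coneD :=
  ⟨1, fun _ => ξ, fun _ => ζ, fun _ => hξ, fun _ => hζ, by simp⟩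

lemma FutureTimelike.futureCausal {w : Vec4} (hw : FutureTimelike w) : FutureCausal w :=
  ⟨hw.1.le, hw.2.le⟩

lemma vecMulVec_self_mem_coneD {w : Vec4} (hw : FutureCausal w) : vecMulVec w w ∈ coneD := by
  have h := symProd_mem_coneD hw hw
  rwa [← two_smul ℝ (vecMulVec w w), smul_smul, one_div, inv_mul_cancel₀ two_ne_zero,
    one_smul] at h

lemma eventually_futureCausal {w : Vec4} (hw : FutureTimelike w) :
    ∀ᶠ v in 𝓝 w, FutureCausal v := by
  have hm : Continuous fun v : Vec4 => mink v v := by unfold mink; fun_prop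
  filter_upwards [hm.continuousAt.eventually (lt_mem_nhds hw.1),
    (continuous_apply (0 : Fin 4)).continuousAt.eventually (lt_mem_nhds hw.2)] with v h1 h2
  exact ⟨le_of_lt h1, le_of_lt h2⟩

/-- The square of a future timelike vector lies in the interior of the cone. -/
lemma eventually_mem_coneD {w : Vec4} (hw : FutureTimelike w) :
    ∀ᶠ M : Mat4 in 𝓝 0, Mᵀ = M → vecMulVec w w + M ∈ coneD := by
  have hc : ∀ i : Fin 4, ∀ᶠ r : ℝ in 𝓝 0, FutureCausal (w + r • Pi.single i 1) := fun i => by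
    have : Continuous fun r : ℝ => w + r • (Pi.single i 1 : Vec4) := by fun_prop
    refine this.continuousAt.eventually ?_
    simpa using eventually_futureCausal hw
  obtain ⟨r, hr, hball⟩ := Metric.eventually_nhds_iff.1 (eventually_all.2 hc)
  have hmem : ∀ i, ∀ s : ℝ, |s| < r → FutureCausal (w + s • Pi.single i 1) := fun i s hs =>
    hball (by simpa using hs) i
  have hM : ∀ᶠ M : Mat4 in 𝓝 0, ∀ i j, |32 / r * M i j| < r := by
    refine eventually_all.2 fun i => eventually_all.2 fun j => ?_
    have : Continuous fun M : Mat4 => |32 / r * M i j| := by fun_prop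
    refine this.continuousAt.eventually (gt_mem_nhds ?_)
    simpa using hr
  filter_upwards [hM] with M hM hMs
  have hr2 : |r / 2| < r := by rw [abs_of_pos (half_pos hr)]; exact half_lt_self hr
  have key : ∀ i j, (1/32 : ℝ) •
      ((1/2 : ℝ) • (vecMulVec (w + (r / 2) • Pi.single i 1)
            (w + (32 / r * M i j) • Pi.single j 1)
          + vecMulVec (w + (32 / r * M i j) • Pi.single j 1) (w + (r / 2) • Pi.single i 1))
        + (1/2 : ℝ) • (vecMulVec (w + (-(r / 2)) • Pi.single i 1)
            (w + (-(32 / r * M i j)) • Pi.single j 1)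
          + vecMulVec (w + (-(32 / r * M i j)) • Pi.single j 1)
            (w + (-(r / 2)) • Pi.single i 1))) ∈ coneD := fun i j =>
    smul_mem_coneD (add_mem_coneD
      (symProd_mem_coneD (hmem i _ hr2) (hmem j _ (hM i j)))
      (symProd_mem_coneD (hmem i _ (by rwa [abs_neg])) (hmem j _ (by rw [abs_neg]; exact hM i j))))
      (by norm_num)
  convert sum_mem_coneD Finset.univ fun i _ => sum_mem_coneD Finset.univ fun j _ => key i j
    using 1
  have hterm : ∀ i j, (1/32 : ℝ) •
      ((1/2 : ℝ) • (vecMulVec (w + (r / 2) • Pi.single i 1)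
            (w + (32 / r * M i j) • Pi.single j 1)
          + vecMulVec (w + (32 / r * M i j) • Pi.single j 1) (w + (r / 2) • Pi.single i 1))
        + (1/2 : ℝ) • (vecMulVec (w + (-(r / 2)) • Pi.single i 1)
            (w + (-(32 / r * M i j)) • Pi.single j 1)
          + vecMulVec (w + (-(32 / r * M i j)) • Pi.single j 1)
            (w + (-(r / 2)) • Pi.single i 1)))
      = (1/16 : ℝ) • vecMulVec w w
        + (1/2 : ℝ) • (Matrix.single i j (M i j) + Matrix.single j i (M j i)) := fun i j => by
    have hs : M j i = M i j := congrFun (congrFun hMs i) j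
    ext a b
    simp only [vecMulVec_apply, Matrix.smul_apply, Matrix.add_apply, Pi.add_apply,
      Pi.smul_apply, smul_eq_mul, Pi.single_apply, Matrix.single_apply, hs, eq_comm (a := a),
      eq_comm (a := b), ite_and]
    have : 32 / r * M i j * (r / 2) = 16 * M i j := by field_simp; ring
    split_ifs <;> linarith
  simp only [hterm, Finset.sum_add_distrib, ← Finset.smul_sum]
  rw [Finset.sum_comm (f := fun i j => Matrix.single j i (M j i)),
    ← Matrix.matrix_eq_sum_single M]
  simp only [Finset.sum_const, Finset.card_univ, Fintype.card_fin]
  module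

lemma generic_vecMulVec_self {w : Vec4} (hw : FutureTimelike w) : Generic (vecMulVec w w) := by
  refine ⟨Matrix.transpose_vecMulVec w w, mem_interior_iff_mem_nhds.2 ?_⟩
  have hcont : Continuous fun A : { A : Mat4 // Aᵀ = A } => A.val - vecMulVec w w := by
    fun_prop
  have h := (hcont.tendsto ⟨vecMulVec w w, Matrix.transpose_vecMulVec w w⟩).eventually
    (p := fun M : Mat4 => Mᵀ = M → vecMulVec w w + M ∈ coneD)
    (by simpa using eventually_mem_coneD hw)
  filter_upwards [h] with A hA
  simpa using hA (by simp [A.2, Matrix.transpose_vecMulVec])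

lemma generic_smul_vecMulVec_self {w : Vec4} (hw : FutureTimelike w) {c : ℝ} (hc : 0 < c) :
    Generic (c • vecMulVec w w) := by
  have hs : c • vecMulVec w w = vecMulVec (√c • w) (√c • w) := by
    rw [Matrix.smul_vecMulVec, Matrix.vecMulVec_smul, smul_smul, Real.mul_self_sqrt hc.le]
  have hm : mink (√c • w) (√c • w) = √c ^ 2 * mink w w := by
    simp only [mink, Pi.smul_apply, smul_eq_mul]; ring
  rw [hs]
  refine generic_vecMulVec_self ⟨?_, mul_pos (Real.sqrt_pos.2 hc) hw.2⟩
  rw [hm, Real.sq_sqrt hc.le]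
  exact mul_pos hc hw.1

/-- The covector field `(A(ℓ) - β'(ℓ) m) dℓ + β(ℓ) dm`, where `ℓ` and `m` are the affine functions
with differentials `w` and `v` vanishing at `c`. -/
def profileField (A β : ℝ → ℝ) (w v c : Vec4) (b : Fin 4) (p : Vec4) : ℝ :=
  (A (w ⬝ᵥ (p - c)) - deriv β (w ⬝ᵥ (p - c)) * (v ⬝ᵥ (p - c))) * w b + β (w ⬝ᵥ (p - c)) * v b

lemma contDiff_dotProduct_sub (w c : Vec4) :
    ContDiff ℝ (⊤ : ℕ∞) fun p : Vec4 => w ⬝ᵥ (p - c) := by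
  simp only [dotProduct, Pi.sub_apply]
  fun_prop

lemma hasDerivAt_dotProduct_sub (w : Vec4) {f : ℝ → Vec4} {f' : Vec4} (c : Vec4) {t : ℝ}
    (hf : HasDerivAt f f' t) : HasDerivAt (fun s => w ⬝ᵥ (f s - c)) (w ⬝ᵥ f') t := by
  simp only [dotProduct, Pi.sub_apply]
  exact HasDerivAt.fun_sum fun i _ => ((hasDerivAt_pi.1 hf i).sub_const (c i)).const_mul (w i)

lemma contDiff_deriv {β : ℝ → ℝ} (hβ : ContDiff ℝ (⊤ : ℕ∞) β) :
    ContDiff ℝ (⊤ : ℕ∞) (deriv β) := (contDiff_infty_iff_deriv.1 hβ).2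

lemma contDiff_profileField {A β : ℝ → ℝ} (hA : ContDiff ℝ (⊤ : ℕ∞) A)
    (hβ : ContDiff ℝ (⊤ : ℕ∞) β) (w v c : Vec4) (b : Fin 4) :
    ContDiff ℝ (⊤ : ℕ∞) (profileField A β w v c b) :=
  (((hA.comp (contDiff_dotProduct_sub w c)).sub
    (((contDiff_deriv hβ).comp (contDiff_dotProduct_sub w c)).mul
      (contDiff_dotProduct_sub v c))).mul contDiff_const).add
    ((hβ.comp (contDiff_dotProduct_sub w c)).mul contDiff_const)

lemma pd_profileField {A β : ℝ → ℝ} (hA : ContDiff ℝ (⊤ : ℕ∞) A)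
    (hβ : ContDiff ℝ (⊤ : ℕ∞) β) (w v c : Vec4) (a b : Fin 4) (p : Vec4) :
    pd a (profileField A β w v c b) p
      = (deriv A (w ⬝ᵥ (p - c)) - deriv (deriv β) (w ⬝ᵥ (p - c)) * (v ⬝ᵥ (p - c))) * w a * w b
        + deriv β (w ⬝ᵥ (p - c)) * (w a * v b - v a * w b) := by
  have hline : HasDerivAt (fun s : ℝ => p + s • (Pi.single a 1 : Vec4)) (Pi.single a 1) 0 := by
    simpa using ((hasDerivAt_id (0 : ℝ)).smul_const (Pi.single a 1 : Vec4)).const_add p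
  have hdir : ∀ u : Vec4, HasDerivAt
      (fun s : ℝ => u ⬝ᵥ (p + s • (Pi.single a 1 : Vec4) - c)) (u a) 0 := fun u => by
    simpa using hasDerivAt_dotProduct_sub u c hline
  have hcomp : ∀ {f : ℝ → ℝ}, ContDiff ℝ (⊤ : ℕ∞) f → HasDerivAt
      (fun s : ℝ => f (w ⬝ᵥ (p + s • (Pi.single a 1 : Vec4) - c)))
      (deriv f (w ⬝ᵥ (p - c)) * w a) 0 := fun {f} hf => by
    have h := (hf.differentiable (by simp) (w ⬝ᵥ (p - c))).hasDerivAt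
    exact HasDerivAt.comp (h₂ := f) 0 (by simpa using h) (hdir w)
  have hd := (contDiff_profileField hA hβ w v c b).differentiable (by simp) p
  have h1 := hd.hasFDerivAt.hasLineDerivAt (Pi.single a 1)
  have h2 := (((hcomp hA).sub ((hcomp (contDiff_deriv hβ)).mul (hdir v))).mul_const (w b)).add
    ((hcomp hβ).mul_const (v b))
  refine (HasDerivAt.unique h1 h2).trans ?_
  simp only [zero_smul, add_zero]
  ring

lemma symGrad_profileField {A β : ℝ → ℝ} (hA : ContDiff ℝ (⊤ : ℕ∞) A)
    (hβ : ContDiff ℝ (⊤ : ℕ∞) β) (w v c p : Vec4) :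
    symGrad (profileField A β w v c) p
      = (deriv A (w ⬝ᵥ (p - c)) - deriv (deriv β) (w ⬝ᵥ (p - c)) * (v ⬝ᵥ (p - c)))
        • vecMulVec w w := by
  ext a b
  simp only [symGrad, Matrix.of_apply, pd_profileField hA hβ, Matrix.smul_apply,
    vecMulVec_apply, smul_eq_mul]
  ring

lemma contDiff_intervalIntegral {f : ℝ → ℝ} (hf : ContDiff ℝ (⊤ : ℕ∞) f) (a : ℝ) :
    ContDiff ℝ (⊤ : ℕ∞) fun t => ∫ s in a..t, f s := by
  have hd : ∀ t, HasDerivAt (fun t => ∫ s in a..t, f s) (f t) t := fun t =>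
    hf.continuous.integral_hasStrictDerivAt a t |>.hasDerivAt
  refine contDiff_infty_iff_deriv.2 ⟨fun t => (hd t).differentiableAt, ?_⟩
  rwa [funext fun t => (hd t).deriv]

lemma eventuallyEq_zero_of_one_lt_abs {β : ℝ → ℝ} (hβ : ∀ τ, 1 < |τ| → β τ = 0) {τ : ℝ}
    (hτ : 1 < |τ|) : β =ᶠ[𝓝 τ] fun _ => 0 := by
  filter_upwards [continuous_abs.continuousAt.eventually (lt_mem_nhds hτ)] with s hs using hβ s hs

/-- One-dimensional profiles for the test field. -/
lemma exists_profile {k : ℝ} (hk : 0 < k) : ∃ A β h : ℝ → ℝ,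
    ContDiff ℝ (⊤ : ℕ∞) A ∧ ContDiff ℝ (⊤ : ℕ∞) β ∧
    (∀ τ, deriv A τ = h τ - k * τ ^ 2 / 2 * deriv (deriv β) τ) ∧
    (∀ τ, 0 ≤ h τ) ∧ (∃ ε > 0, ∀ τ, |τ| ≤ 1 → ε ≤ h τ) ∧
    (∀ τ, 1 < |τ| → β τ = 0) ∧ (∀ τ, 2 ≤ |τ| → A τ = 0) := by
  let b₁ : ContDiffBump (0 : ℝ) := ⟨1 / 2, 1, by norm_num, by norm_num⟩
  let b₂ : ContDiffBump (0 : ℝ) := ⟨1, 2, by norm_num, by norm_num⟩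
  have hb₁ : ContDiff ℝ (⊤ : ℕ∞) b₁ := b₁.contDiff
  have hb₂ : ContDiff ℝ (⊤ : ℕ∞) b₂ := b₂.contDiff
  have hI₁ : 0 < ∫ τ, b₁ τ := b₁.integral_pos
  have hI₂ : 0 < ∫ τ, b₂ τ := b₂.integral_pos
  set c : ℝ := k * (∫ τ, b₁ τ) / ∫ τ, b₂ τ with hc
  have hc0 : 0 < c := by positivity
  have hz₁ : ∀ τ : ℝ, 1 ≤ |τ| → b₁ τ = 0 := fun τ hτ =>
    b₁.zero_of_le_dist (by simpa using hτ)
  have hz₂ : ∀ τ : ℝ, 2 ≤ |τ| → b₂ τ = 0 := fun τ hτ =>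
    b₂.zero_of_le_dist (by simpa using hτ)
  have hf : ContDiff ℝ (⊤ : ℕ∞) fun τ => c * b₂ τ - k * b₁ τ :=
    (contDiff_const.mul hb₂).sub (contDiff_const.mul hb₁)
  have hfz : ∀ τ : ℝ, 2 ≤ |τ| → c * b₂ τ - k * b₁ τ = 0 := fun τ hτ => by
    rw [hz₂ τ hτ, hz₁ τ (by linarith)]; ring
  have htot : ∫ τ, (c * b₂ τ - k * b₁ τ) = 0 := by
    rw [integral_sub (b₂.integrable.const_mul c) (b₁.integrable.const_mul k),
      integral_const_mul, integral_const_mul, hc]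
    field_simp
    ring
  have hWz : ∀ τ : ℝ, 2 ≤ |τ| → ∫ s in (-2)..τ, (c * b₂ s - k * b₁ s) = 0 := by
    intro τ hτ
    rcases le_abs'.1 hτ with h | h
    · rw [intervalIntegral.integral_congr (g := fun _ => 0), intervalIntegral.integral_zero]
      intro s hs
      rw [Set.uIcc_of_ge h] at hs
      exact hfz s (le_abs'.2 (Or.inl hs.2))
    · refine (intervalIntegral.integral_eq_integral_of_support_subset fun s hs => ?_).trans htot
      by_contra hns
      refine hs (hfz s (le_abs'.2 ?_))
      by_contra! hlt
      exact hns ⟨hlt.1, by linarith⟩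
  have hd₁ : ∀ τ, HasDerivAt b₁ (deriv b₁ τ) τ := fun τ =>
    (hb₁.differentiable (by simp) τ).hasDerivAt
  have hd₂ : ∀ τ, HasDerivAt (deriv b₁) (deriv (deriv b₁) τ) τ := fun τ =>
    ((contDiff_deriv hb₁).differentiable (by simp) τ).hasDerivAt
  refine ⟨fun τ => (∫ s in (-2)..τ, (c * b₂ s - k * b₁ s))
    - k * (τ ^ 2 / 2 * deriv b₁ τ - τ * b₁ τ), b₁, fun τ => c * b₂ τ, ?_, hb₁, ?_, ?_,
    ⟨c, hc0, ?_⟩, fun τ hτ => hz₁ τ hτ.le, ?_⟩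
  · have := contDiff_deriv hb₁
    exact (contDiff_intervalIntegral hf _).sub (by fun_prop)
  · intro τ
    have hW := (hf.continuous.integral_hasStrictDerivAt (-2) τ).hasDerivAt
    have h := hW.sub (((((hasDerivAt_pow 2 τ).div_const 2).mul (hd₂ τ)).sub
      ((hasDerivAt_id τ).mul (hd₁ τ))).const_mul k)
    refine h.deriv.trans ?_
    simp
    ring
  · exact fun τ => mul_nonneg hc0.le b₂.nonneg
  · intro τ hτ
    simp [b₂.one_of_mem_closedBall (x := τ) (by simpa using hτ)]
  · intro τ hτ
    have hev := eventuallyEq_zero_of_one_lt_abs (fun s hs => hz₁ s (le_of_lt hs))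
      (show 1 < |τ| by linarith)
    simp [hWz τ hτ, hev.deriv_eq, hz₁ τ (by linarith)]

lemma exists_abs_le_sq_of_deriv_eq_zero {f : ℝ → ℝ} (hf : ContDiff ℝ (⊤ : ℕ∞) f) {t₀ : ℝ}
    (h0 : f t₀ = 0) (h1 : deriv f t₀ = 0) (h2 : deriv (deriv f) t₀ = 0) {ε : ℝ} (hε : 0 < ε) :
    ∃ δ > 0, ∀ t, |t - t₀| < δ → |f t| ≤ ε * (t - t₀) ^ 2 := by
  have hd := ((contDiff_deriv hf).differentiable (by simp) t₀).hasDerivAt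
  rw [h2, hasDerivAt_iff_isLittleO] at hd
  obtain ⟨δ, hδ, hball⟩ := Metric.eventually_nhds_iff.1 (hd.def hε)
  refine ⟨δ, hδ, fun t ht => ?_⟩
  have hbound : ∀ s ∈ Set.uIcc t₀ t, ‖deriv f s‖ ≤ ε * |t - t₀| := fun s hs => by
    have hst : |s - t₀| ≤ |t - t₀| := Set.abs_sub_left_of_mem_uIcc hs
    have := hball (y := s) (by rw [Real.dist_eq]; linarith)
    simp only [h1, smul_zero, sub_zero, Real.norm_eq_abs] at this ⊢
    exact this.trans (mul_le_mul_of_nonneg_left hst hε.le)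
  have h := (convex_uIcc t₀ t).norm_image_sub_le_of_norm_deriv_le
    (fun s _ => hf.differentiable (by simp) s) hbound Set.left_mem_uIcc Set.right_mem_uIcc
  rw [h0, sub_zero, Real.norm_eq_abs, Real.norm_eq_abs, mul_assoc, ← sq, sq_abs] at h
  exact h

/-- Index lowering with the Minkowski metric. -/
def lowerIndex (x : Vec4) : Vec4 := ![x 0, -x 1, -x 2, -x 3]

lemma lowerIndex_dotProduct (x y : Vec4) : lowerIndex x ⬝ᵥ y = mink x y := by
  simp [lowerIndex, dotProduct, Fin.sum_univ_four, mink]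
  ring

lemma FutureTimelike.smul_lowerIndex {x : Vec4} (hx : FutureTimelike x) {c : ℝ} (hc : 0 < c) :
    FutureTimelike (c • lowerIndex x) := by
  have h : mink (c • lowerIndex x) (c • lowerIndex x) = c ^ 2 * mink x x := by
    simp [mink, lowerIndex]; ring
  refine ⟨?_, mul_pos hc hx.2⟩
  rw [h]
  exact mul_pos (pow_pos hc 2) hx.1

/-- A nonzero vector orthogonal to a timelike vector is spacelike. -/
lemma mink_self_neg_of_orthogonal {u a : Vec4} (hu : FutureTimelike u) (h : mink u a = 0)
    (ha : a ≠ 0) : mink a a < 0 := by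
  obtain ⟨hu1, hu0⟩ := hu
  simp only [mink] at *
  have hcs : (u 0 * a 0) ^ 2 ≤ (u 1 ^ 2 + u 2 ^ 2 + u 3 ^ 2) * (a 1 ^ 2 + a 2 ^ 2 + a 3 ^ 2) := by
    have : u 0 * a 0 = u 1 * a 1 + u 2 * a 2 + u 3 * a 3 := by linarith
    rw [this]
    nlinarith [sq_nonneg (u 1 * a 2 - u 2 * a 1), sq_nonneg (u 1 * a 3 - u 3 * a 1),
      sq_nonneg (u 2 * a 3 - u 3 * a 2)]
  have hpos : 0 < a 1 ^ 2 + a 2 ^ 2 + a 3 ^ 2 := by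
    by_contra! hle
    have h1 : a 1 = 0 := by nlinarith [sq_nonneg (a 1), sq_nonneg (a 2), sq_nonneg (a 3)]
    have h2 : a 2 = 0 := by nlinarith [sq_nonneg (a 1), sq_nonneg (a 2), sq_nonneg (a 3)]
    have h3 : a 3 = 0 := by nlinarith [sq_nonneg (a 1), sq_nonneg (a 2), sq_nonneg (a 3)]
    have h0 : a 0 = 0 := by
      have : u 0 * a 0 = 0 := by rw [h1, h2, h3] at h; linarith
      exact (mul_eq_zero.1 this).resolve_left hu0.ne'
    exact ha (funext fun i => by fin_cases i <;> assumption)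
  by_contra! hle
  nlinarith [mul_pos hpos (show 0 < u 0 ^ 2 - (u 1 ^ 2 + u 2 ^ 2 + u 3 ^ 2) by nlinarith),
    mul_nonneg (sq_nonneg (u 0)) hle]

/-- The reverse Cauchy–Schwarz inequality for unit future timelike vectors. -/
lemma one_le_mink {u v : Vec4} (hu : FutureTimelike u) (hv : FutureTimelike v)
    (hu1 : mink u u = 1) (hv1 : mink v v = 1) : 1 ≤ mink u v := by
  have hu0 := hu.2
  have hv0 := hv.2
  simp only [mink] at *
  have hsq : (1 + (u 1 * v 1 + u 2 * v 2 + u 3 * v 3)) ^ 2 ≤ (u 0 * v 0) ^ 2 := by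
    have h1 : (u 0 * v 0) ^ 2 = (1 + (u 1 ^ 2 + u 2 ^ 2 + u 3 ^ 2))
        * (1 + (v 1 ^ 2 + v 2 ^ 2 + v 3 ^ 2)) := by
      rw [mul_pow, show u 0 ^ 2 = 1 + (u 1 ^ 2 + u 2 ^ 2 + u 3 ^ 2) by linarith,
        show v 0 ^ 2 = 1 + (v 1 ^ 2 + v 2 ^ 2 + v 3 ^ 2) by linarith]
    rw [h1]
    nlinarith [sq_nonneg (u 1 * v 2 - u 2 * v 1), sq_nonneg (u 1 * v 3 - u 3 * v 1),
      sq_nonneg (u 2 * v 3 - u 3 * v 2), sq_nonneg (u 1 - v 1), sq_nonneg (u 2 - v 2),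
      sq_nonneg (u 3 - v 3)]
  have := le_of_sq_le_sq hsq (by positivity)
  linarith

lemma mink_deriv_deriv_eq_zero {γ : ℝ → Vec4} (hγ : ContDiff ℝ (⊤ : ℕ∞) γ)
    (hunit : ∀ t, mink (deriv γ t) (deriv γ t) = 1) (t : ℝ) :
    mink (deriv γ t) (deriv (deriv γ) t) = 0 := by
  have hd : HasDerivAt (deriv γ) (deriv (deriv γ) t) t :=
    (((contDiff_infty_iff_deriv.1 hγ).2).differentiable (by simp) t).hasDerivAt
  have hi := hasDerivAt_pi.1 hd
  have h := ((((hi 0).mul (hi 0)).sub ((hi 1).mul (hi 1))).sub ((hi 2).mul (hi 2))).sub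
    ((hi 3).mul (hi 3))
  have hc : HasDerivAt (fun s => mink (deriv γ s) (deriv γ s)) 0 t := by
    simpa only [hunit] using hasDerivAt_const t (1 : ℝ)
  have := HasDerivAt.unique h hc
  simp only [mink]
  linarith

/-- A curve is not tracked if some profile field has a symmetrized gradient that satisfies the dual
energy condition near the curve and is generic at one of its points. -/
lemma not_tracks_of_profileField {γ : ℝ → Vec4} {C : Set (Vec4 → Mat4)}
    (hC : ∀ T ∈ C, SmoothMatField T ∧ SymValued T ∧ (∀ p, DEC (T p)) ∧ DivFree T)
    {A β : ℝ → ℝ} (hA : ContDiff ℝ (⊤ : ℕ∞) A) (hβ : ContDiff ℝ (⊤ : ℕ∞) β)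
    (hA0 : ∀ τ, 2 ≤ |τ| → A τ = 0) (hβ0 : ∀ τ, 1 < |τ| → β τ = 0)
    (hA' : ∀ τ, 1 < |τ| → 0 ≤ deriv A τ) {w v c : Vec4} (hw : FutureTimelike w)
    {R : ℝ} (hR : 0 < R)
    (hcurve : ∀ t, |w ⬝ᵥ (γ t - c)| ≤ 2 → γ t ∈ Metric.ball c R ∧
      (|w ⬝ᵥ (γ t - c)| ≤ 1 → 0 < deriv A (w ⬝ᵥ (γ t - c))
        - deriv (deriv β) (w ⬝ᵥ (γ t - c)) * (v ⬝ᵥ (γ t - c))))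
    {t₀ : ℝ} (ht₀ : γ t₀ = c) : ¬ Tracks C γ := by
  intro htr
  let χ : ContDiffBump c := ⟨R, R + 1, hR, by linarith⟩
  have hχ : ContDiff ℝ (⊤ : ℕ∞) χ := χ.contDiff
  set ξ : Fin 4 → Vec4 → ℝ := fun b p => χ p * profileField A β w v c b p with hξdef
  have hξ : ∀ b, ContDiff ℝ (⊤ : ℕ∞) (ξ b) := fun b =>
    hχ.mul (contDiff_profileField hA hβ w v c b)
  have hξc : ∀ b, HasCompactSupport (ξ b) := fun b => χ.hasCompactSupport.mul_right
  have hβ1 : ∀ τ, 1 < |τ| → deriv β τ = 0 := fun τ hτ => by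
    simp [(eventuallyEq_zero_of_one_lt_abs hβ0 hτ).deriv_eq]
  have hβ2 : ∀ τ, 1 < |τ| → deriv (deriv β) τ = 0 := fun τ hτ => by
    simp [(eventuallyEq_zero_of_one_lt_abs hβ0 hτ).deriv.deriv_eq]
  set F : Vec4 → ℝ := fun p => deriv A (w ⬝ᵥ (p - c))
    - deriv (deriv β) (w ⬝ᵥ (p - c)) * (v ⬝ᵥ (p - c)) with hFdef
  have hℓ : Continuous fun p : Vec4 => |w ⬝ᵥ (p - c)| :=
    (contDiff_dotProduct_sub w c).continuous.abs
  have hF : Continuous F :=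
    ((contDiff_deriv hA).continuous.comp (contDiff_dotProduct_sub w c).continuous).sub
      (((contDiff_deriv (contDiff_deriv hβ)).continuous.comp
        (contDiff_dotProduct_sub w c).continuous).mul (contDiff_dotProduct_sub v c).continuous)
  have hball : ∀ p ∈ Metric.ball c R, symGrad ξ p = F p • vecMulVec w w := fun p hp => by
    rw [← symGrad_profileField hA hβ]
    refine symGrad_congr fun b => ?_
    filter_upwards [χ.eventuallyEq_one_of_mem_ball hp] with q hq
    simp [hξdef, hq]
  have hfar : ∀ p, 2 < |w ⬝ᵥ (p - c)| → symGrad ξ p = 0 := fun p hp => by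
    refine symGrad_eq_zero fun b => ?_
    filter_upwards [hℓ.continuousAt.eventually (lt_mem_nhds hp)] with q hq
    have h1 : 1 < |w ⬝ᵥ (q - c)| := by linarith
    simp [-dotProduct_sub, hξdef, profileField, hA0 _ (le_of_lt hq), hβ0 _ h1, hβ1 _ h1]
  have hcpt : HasCompactSupport (symGrad ξ) := by
    refine HasCompactSupport.intro χ.hasCompactSupport fun p hp => symGrad_eq_zero fun b => ?_
    filter_upwards [notMem_tsupport_iff_eventuallyEq.1 hp] with q hq
    simp [hξdef, hq]
  have hgen : Generic (symGrad ξ (γ t₀)) := by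
    obtain ⟨hb, hpos⟩ := hcurve t₀ (by simp [ht₀])
    rw [hball _ hb]
    exact generic_smul_vecMulVec_self hw (hpos (by simp [ht₀]))
  have hdual : ∃ O : Set Vec4, IsOpen O ∧ Set.range γ ⊆ O ∧ ∀ p ∈ O, symGrad ξ p ∈ coneD := by
    refine ⟨{p | 2 < |w ⬝ᵥ (p - c)|} ∪
      Metric.ball c R ∩ ({p | 0 < F p} ∪ {p | 1 < |w ⬝ᵥ (p - c)|}), ?_, ?_, ?_⟩
    · exact (isOpen_lt continuous_const hℓ).union (Metric.isOpen_ball.inter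
        ((isOpen_lt continuous_const hF).union (isOpen_lt continuous_const hℓ)))
    · rintro _ ⟨t, rfl⟩
      refine (lt_or_ge 2 |w ⬝ᵥ (γ t - c)|).imp id fun h => ⟨(hcurve t h).1, ?_⟩
      exact (le_or_gt |w ⬝ᵥ (γ t - c)| 1).imp (hcurve t h).2 id
    · rintro p (hp | ⟨hb, hp⟩)
      · rw [hfar p hp]
        exact zero_mem_coneD
      · rw [hball p hb]
        refine smul_mem_coneD (vecMulVec_self_mem_coneD hw.futureCausal) ?_
        rcases hp with hp | hp
        · exact le_of_lt hp
        · simpa [-dotProduct_sub, hFdef, hβ2 _ hp] using hA' _ hp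
  obtain ⟨T, hT, hpos⟩ := htr (symGrad ξ) (smoothMatField_symGrad hξ) hcpt
    (symValued_symGrad ξ) hdual ⟨t₀, hgen⟩
  obtain ⟨hT1, hT2, -, hT4⟩ := hC T hT
  exact hpos.ne' (integral_minner_symGrad_eq_zero hT1 hT2 hT4 hξ hξc)

/-- Near a point, the projection of a unit timelike curve onto the direction of its acceleration is
quadratic in the projection onto its velocity, to second order. -/
lemma exists_abs_mink_acceleration_le {γ : ℝ → Vec4} (hγ : ContDiff ℝ (⊤ : ℕ∞) γ)
    (hunit : ∀ t, mink (deriv γ t) (deriv γ t) = 1) (t₀ : ℝ) {ε : ℝ} (hε : 0 < ε) :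
    ∃ δ > 0, ∀ t, |t - t₀| < δ →
      |mink (deriv (deriv γ) t₀) (γ t - γ t₀)
          - mink (deriv (deriv γ) t₀) (deriv (deriv γ) t₀)
            * mink (deriv γ t₀) (γ t - γ t₀) ^ 2 / 2| ≤ ε * (t - t₀) ^ 2 := by
  have hd1 : ∀ t, HasDerivAt γ (deriv γ t) t := fun t =>
    (hγ.differentiable (by simp) t).hasDerivAt
  have hd2 : HasDerivAt (deriv γ) (deriv (deriv γ) t₀) t₀ :=
    (((contDiff_infty_iff_deriv.1 hγ).2).differentiable (by simp) t₀).hasDerivAt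
  have horth := mink_deriv_deriv_eq_zero hγ hunit t₀
  have hu := hunit t₀
  set u := deriv γ t₀
  set a := deriv (deriv γ) t₀
  simp only [← lowerIndex_dotProduct] at *
  have hsymm : lowerIndex a ⬝ᵥ u = 0 := by
    rw [← horth]; simp only [lowerIndex_dotProduct, mink]; ring
  set f : ℝ → ℝ := fun t => lowerIndex a ⬝ᵥ (γ t - γ t₀)
    - (lowerIndex a ⬝ᵥ a) * (lowerIndex u ⬝ᵥ (γ t - γ t₀)) ^ 2 / 2 with hf
  have hsmooth : ContDiff ℝ (⊤ : ℕ∞) f := by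
    have h1 := (contDiff_dotProduct_sub (lowerIndex a) (γ t₀)).comp hγ
    have h2 := (contDiff_dotProduct_sub (lowerIndex u) (γ t₀)).comp hγ
    exact h1.sub ((contDiff_const.mul (h2.pow 2)).div_const 2)
  have hf1 : deriv f = fun t => lowerIndex a ⬝ᵥ (deriv γ t - 0) - (lowerIndex a ⬝ᵥ a) *
      ((lowerIndex u ⬝ᵥ (γ t - γ t₀)) * (lowerIndex u ⬝ᵥ (deriv γ t - 0))) := by
    funext t
    have h1 := hasDerivAt_dotProduct_sub (lowerIndex a) (γ t₀) (hd1 t)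
    have h2 := hasDerivAt_dotProduct_sub (lowerIndex u) (γ t₀) (hd1 t)
    refine (h1.sub (((h2.pow 2).const_mul (lowerIndex a ⬝ᵥ a)).div_const 2)).deriv.trans ?_
    simp
    ring
  have hf2 : deriv (deriv f) t₀ = 0 := by
    rw [hf1]
    have h1 := hasDerivAt_dotProduct_sub (lowerIndex a) 0 hd2
    have h2 := hasDerivAt_dotProduct_sub (lowerIndex u) 0 hd2
    have h3 := hasDerivAt_dotProduct_sub (lowerIndex u) (γ t₀) (hd1 t₀)
    refine (h1.sub ((h3.mul h2).const_mul (lowerIndex a ⬝ᵥ a))).deriv.trans ?_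
    simp [u, hu]
  refine exists_abs_le_sq_of_deriv_eq_zero hsmooth (by simp [hf]) ?_ hf2 hε
  simp [hf1, u] at hsymm ⊢
  exact hsymm

lemma abs_sub_le_abs_mink {γ : ℝ → Vec4} (hγ : ContDiff ℝ (⊤ : ℕ∞) γ)
    (hunit : ∀ t, mink (deriv γ t) (deriv γ t) = 1) (htl : ∀ t, FutureTimelike (deriv γ t))
    (t₀ t : ℝ) : |t - t₀| ≤ |mink (deriv γ t₀) (γ t - γ t₀)| := by
  have hd : ∀ s, HasDerivAt (fun s => lowerIndex (deriv γ t₀) ⬝ᵥ (γ s - γ t₀))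
      (lowerIndex (deriv γ t₀) ⬝ᵥ deriv γ s) s := fun s =>
    hasDerivAt_dotProduct_sub _ _ (hγ.differentiable (by simp) s).hasDerivAt
  have hmono := mul_sub_le_image_sub_of_le_deriv (C := 1) (fun s => (hd s).differentiableAt)
    fun s => by
      rw [(hd s).deriv, lowerIndex_dotProduct]
      exact one_le_mink (htl t₀) (htl s) (hunit t₀) (hunit s)
  rw [← lowerIndex_dotProduct]
  rcases le_total t₀ t with h | h
  · have := hmono h
    simp only [sub_self, dotProduct_zero, sub_zero, one_mul] at this
    rw [abs_of_nonneg (sub_nonneg.2 h)]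
    exact this.trans (le_abs_self _)
  · have := hmono h
    simp only [sub_self, dotProduct_zero, zero_sub, one_mul] at this
    rw [abs_of_nonpos (sub_nonpos.2 h), neg_sub]
    exact this.trans (neg_le_abs _)

/-- Tracked curves are geodesics. -/
theorem tracking_implies_geodesic (γ : ℝ → Vec4) (hγ : ContDiff ℝ (⊤ : ℕ∞) γ)
    (hunit : ∀ t : ℝ, mink (deriv γ t) (deriv γ t) = 1)
    (htl : ∀ t : ℝ, FutureTimelike (deriv γ t))
    (C : Set (Vec4 → Mat4))
    (hC : ∀ T ∈ C, SmoothMatField T ∧ SymValued T ∧ (∀ p, DEC (T p)) ∧ DivFree T)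
    (htr : Tracks C γ) :
    ∀ t : ℝ, deriv (deriv γ) t = 0 := by
  intro t₀
  by_contra ha
  set u := deriv γ t₀ with hu
  set a := deriv (deriv γ) t₀ with haa
  have hk : 0 < -mink a a := neg_pos.2
    (mink_self_neg_of_orthogonal (htl t₀) (mink_deriv_deriv_eq_zero hγ hunit t₀) ha)
  obtain ⟨A, β, h, hA, hβ, hA', hh, ⟨ε, hε, hεh⟩, hβ0, hA0⟩ := exists_profile hk
  obtain ⟨B, hB⟩ := (isCompact_Icc (a := (-1 : ℝ)) (b := 1)).exists_bound_of_continuousOn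
    (contDiff_deriv (contDiff_deriv hβ)).continuous.continuousOn
  have hB0 : 0 ≤ B := (norm_nonneg _).trans (hB 0 (by simp))
  obtain ⟨δ, hδ, hquad⟩ := exists_abs_mink_acceleration_le hγ hunit t₀
    (show 0 < ε / (B + 1) by positivity)
  obtain ⟨R, hR, hsub⟩ := ((isCompact_Icc (a := t₀ - 1) (b := t₀ + 1)).image
    hγ.continuous).isBounded.subset_ball_lt 0 (γ t₀)
  set r : ℝ := min δ 1 / 3 with hr
  have hr0 : 0 < r := by positivity
  have hr1 : 2 * r < 1 := by have := min_le_right δ 1; linarith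
  have hrδ : r < δ := by have := min_le_left δ 1; linarith
  have hℓ : ∀ x : Vec4, (r⁻¹ • lowerIndex u) ⬝ᵥ x = r⁻¹ * mink u x := fun x => by
    rw [smul_dotProduct, lowerIndex_dotProduct, smul_eq_mul]
  have hm : ∀ x : Vec4, ((r⁻¹) ^ 2 • lowerIndex a) ⬝ᵥ x = (r⁻¹) ^ 2 * mink a x := fun x => by
    rw [smul_dotProduct, lowerIndex_dotProduct, smul_eq_mul]
  have hclose : ∀ t b, |r⁻¹ * mink u (γ t - γ t₀)| ≤ b → |t - t₀| ≤ b * r := fun t b hb => by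
    rw [abs_mul, abs_of_pos (inv_pos.2 hr0), inv_mul_le_iff₀ hr0] at hb
    linarith [abs_sub_le_abs_mink hγ hunit htl t₀ t]
  have hβ2 : ∀ τ, 1 < |τ| → deriv (deriv β) τ = 0 := fun τ hτ => by
    simp [(eventuallyEq_zero_of_one_lt_abs hβ0 hτ).deriv.deriv_eq]
  refine not_tracks_of_profileField hC hA hβ hA0 hβ0
    (fun τ hτ => by rw [hA', hβ2 τ hτ, mul_zero, sub_zero]; exact hh τ)
    (w := r⁻¹ • lowerIndex u) (v := (r⁻¹) ^ 2 • lowerIndex a)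
    ((htl t₀).smul_lowerIndex (inv_pos.2 hr0)) hR (fun t ht => ⟨?_, fun ht1 => ?_⟩) (t₀ := t₀) rfl htr
  · rw [hℓ] at ht
    have := abs_le.1 (hclose t 2 ht)
    exact hsub ⟨t, ⟨by linarith, by linarith⟩, rfl⟩
  · rw [hℓ] at ht1
    rw [hℓ, hm, hA']
    have htr1 : |t - t₀| ≤ r := by simpa using hclose t 1 ht1
    have hq := hquad t (htr1.trans_lt hrδ)
    set τ := r⁻¹ * mink u (γ t - γ t₀) with hτ
    set g := mink a (γ t - γ t₀) - mink a a * mink u (γ t - γ t₀) ^ 2 / 2 with hg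
    have hg' : |(r⁻¹) ^ 2 * g| ≤ ε / (B + 1) := by
      have hsq : (t - t₀) ^ 2 ≤ r ^ 2 := sq_le_sq' (abs_le.1 htr1).1 (abs_le.1 htr1).2
      rw [abs_mul, abs_of_pos (by positivity), inv_pow, inv_mul_le_iff₀ (by positivity),
        mul_comm]
      exact hq.trans (mul_le_mul_of_nonneg_left hsq (by positivity))
    have hprod : |deriv (deriv β) τ * ((r⁻¹) ^ 2 * g)| ≤ B * (ε / (B + 1)) := by
      rw [abs_mul]
      exact mul_le_mul (hB τ (abs_le.1 ht1)) hg' (abs_nonneg _) hB0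
    have hlt : B * (ε / (B + 1)) < ε := by
      rw [mul_div_assoc', div_lt_iff₀ (by positivity)]
      nlinarith
    have hid : h τ - -mink a a * τ ^ 2 / 2 * deriv (deriv β) τ
        - deriv (deriv β) τ * ((r⁻¹) ^ 2 * mink a (γ t - γ t₀))
        = h τ - deriv (deriv β) τ * ((r⁻¹) ^ 2 * g) := by
      rw [hτ, hg]; ring
    rw [hid]
    linarith [hεh τ ht1, le_abs_self (deriv (deriv β) τ * ((r⁻¹) ^ 2 * g))]
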